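/- Fix d ≥ 2, let H_d = ∑_{j=1}^d 1/j, p_k = (1/k)/H_d, and f(θ) = KL(p‖σ(θ)). Define the complexity of f under a norm ‖·‖ as C_{‖·‖}(f) = 8·L_{‖·‖}(f)·(min_{θ* ∈ argmin f} ‖θ*‖)², where L_{‖·‖}(f) is the smallest L with ‖∇f(x) − ∇f(y)‖_* ≤ L‖x − y‖ for all x, y. Then C_{ℓ∞}(f) = 2(log d)², while C_{ℓ2}(f) ≥ 4·d·V_d, and there is a constant c > 0 independent of d such that C_{ℓ2}(f) ≥ c·d for all d ≥ 2. In particular C_{ℓ∞}(f)/C_{ℓ2}(f) → 0 as d → ∞. -/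

import Mathlib

/-!
The gradient of `floss d` at `θ` is `softmax θ - p`, so both smoothness constants are Lipschitz
constants of the softmax map, and the minimizers are exactly the vectors `θ_k = a - log k`.

* `Linf d = 1`. For the set `S` of coordinates where `σ(x) ≥ σ(y)`, the `ℓ1` distance is
  `2 (σ(x)(S) - σ(y)(S))`. If `‖x - y‖_∞ = δ`, the masses of `S` and of its complement change by
  factors at most `e^δ`, which bounds the distance by `2 (e^δ - 1) / (e^δ + 1) ≤ δ`
  (`softmax_l1_le`). Moving one coordinate against all the others, around a point where it carries
  half of the mass, shows that `1` is optimal (`one_le_of_Linf`).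
* `Ltwo d ≥ 1/2`. Exchange mass between two coordinates carrying almost all of it
  (`half_le_of_Ltwo`).
* The minimal sup norm of `a - log k` is `(log d) / 2`, and its squared `ℓ2` norm is at least
  `d V_d`, the sum of squared deviations of `log k` from its mean.
* `V_d` is bounded below: with `m = ⌊d/2⌋`, each of the `m ≥ d/3` disjoint pairs `(k, k + m)`,
  `k ≤ m`, contributes at least `(log 2)² / 2` to `∑ (log k - a)²` (`sum_log_sub_sq_ge`).

The ratio of complexities is then `O((log d)² / d)`.
-/

/-- The softmax map `σ : ℝ^d → ℝ^d`, `σ(θ)_k = exp(θ_k) / ∑_j exp(θ_j)`. -/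
noncomputable def softmax {d : ℕ} (θ : Fin d → ℝ) : Fin d → ℝ :=
  fun k => Real.exp (θ k) / ∑ j, Real.exp (θ j)

/-- The gradient of `f : ℝ^d → ℝ` (vector of partial derivatives). -/
noncomputable def grad {d : ℕ} (f : (Fin d → ℝ) → ℝ) (θ : Fin d → ℝ) : Fin d → ℝ :=
  fun k => fderiv ℝ f θ (Pi.single k 1)

/-- The ℓ1 norm on `ℝ^d`. -/
noncomputable def l1norm {d : ℕ} (x : Fin d → ℝ) : ℝ := ∑ k, |x k|

/-- The ℓ2 norm on `ℝ^d`. -/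
noncomputable def l2norm {d : ℕ} (x : Fin d → ℝ) : ℝ := Real.sqrt (∑ k, (x k) ^ 2)

/-- The heavy-tailed token distribution `p_k = (1/k)/H_d`, `H_d = ∑_{j=1}^d 1/j`. -/
noncomputable def pvec (d : ℕ) : Fin d → ℝ :=
  fun k => ((1 : ℝ) / ((k : ℕ) + 1)) / ∑ j : Fin d, (1 : ℝ) / ((j : ℕ) + 1)

/-- The softmax unigram loss `f(θ) = KL(p‖σ(θ))`. -/
noncomputable def floss (d : ℕ) (θ : Fin d → ℝ) : ℝ :=
  ∑ k, pvec d k * Real.log (pvec d k / softmax θ k)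

/-- `L_{ℓ∞}(f)`: the smallest `L` with `‖∇f(x) − ∇f(y)‖₁ ≤ L‖x − y‖_∞` for all `x,y`
(the norm on `Fin d → ℝ` is the sup norm). -/
noncomputable def Linf (d : ℕ) : ℝ :=
  sInf {L : ℝ | 0 ≤ L ∧ ∀ x y : Fin d → ℝ,
    l1norm (grad (floss d) x - grad (floss d) y) ≤ L * ‖x - y‖}

/-- `L_{ℓ2}(f)`: the smallest `L` with `‖∇f(x) − ∇f(y)‖₂ ≤ L‖x − y‖₂` for all `x,y`. -/
noncomputable def Ltwo (d : ℕ) : ℝ :=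
  sInf {L : ℝ | 0 ≤ L ∧ ∀ x y : Fin d → ℝ,
    l2norm (grad (floss d) x - grad (floss d) y) ≤ L * l2norm (x - y)}

/-- `min_{θ⋆ ∈ argmin f} ‖θ⋆‖_∞`. -/
noncomputable def minNormInf (d : ℕ) : ℝ :=
  sInf {r : ℝ | ∃ θ : Fin d → ℝ, (∀ η, floss d θ ≤ floss d η) ∧ r = ‖θ‖}

/-- `min_{θ⋆ ∈ argmin f} ‖θ⋆‖₂`. -/
noncomputable def minNormTwo (d : ℕ) : ℝ :=
  sInf {r : ℝ | ∃ θ : Fin d → ℝ, (∀ η, floss d θ ≤ floss d η) ∧ r = l2norm θ}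

/-- The complexity `C_{ℓ∞}(f) = 8·L_{ℓ∞}(f)·(min_{θ⋆∈argmin f}‖θ⋆‖_∞)²`. -/
noncomputable def Cinf (d : ℕ) : ℝ := 8 * Linf d * (minNormInf d) ^ 2

/-- The complexity `C_{ℓ2}(f) = 8·L_{ℓ2}(f)·(min_{θ⋆∈argmin f}‖θ⋆‖₂)²`. -/
noncomputable def Ctwo (d : ℕ) : ℝ := 8 * Ltwo d * (minNormTwo d) ^ 2

/-- `V_d`, the variance of `log k` for `k` uniform on `{1,…,d}`. -/
noncomputable def logVar (d : ℕ) : ℝ :=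
  (1 / (d : ℝ)) * ∑ k ∈ Finset.Icc 1 d, (Real.log (k : ℝ)) ^ 2 -
    ((1 / (d : ℝ)) * ∑ k ∈ Finset.Icc 1 d, Real.log (k : ℝ)) ^ 2

/-! ### The gradient and the minimizers -/

lemma sum_exp_pos {d : ℕ} (hd : 0 < d) (θ : Fin d → ℝ) : 0 < ∑ j, Real.exp (θ j) := by
  have : Nonempty (Fin d) := ⟨⟨0, hd⟩⟩
  exact Finset.sum_pos (fun _ _ => Real.exp_pos _) Finset.univ_nonempty

lemma sum_inv_pos {d : ℕ} (hd : 0 < d) : 0 < ∑ j : Fin d, (1 : ℝ) / ((j : ℕ) + 1) := by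
  have : Nonempty (Fin d) := ⟨⟨0, hd⟩⟩
  exact Finset.sum_pos (fun _ _ => by positivity) Finset.univ_nonempty

lemma softmax_pos {d : ℕ} (hd : 0 < d) (θ : Fin d → ℝ) (k : Fin d) : 0 < softmax θ k :=
  div_pos (Real.exp_pos _) (sum_exp_pos hd θ)

lemma sum_softmax {d : ℕ} (hd : 0 < d) (θ : Fin d → ℝ) : ∑ k, softmax θ k = 1 := by
  unfold softmax
  rw [← Finset.sum_div, div_self (sum_exp_pos hd θ).ne']

lemma pvec_pos {d : ℕ} (hd : 0 < d) (k : Fin d) : 0 < pvec d k :=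
  div_pos (by positivity) (sum_inv_pos hd)

lemma sum_pvec {d : ℕ} (hd : 0 < d) : ∑ k, pvec d k = 1 := by
  unfold pvec
  rw [← Finset.sum_div, div_self (sum_inv_pos hd).ne']

lemma floss_eq {d : ℕ} (hd : 0 < d) (θ : Fin d → ℝ) :
    floss d θ = ∑ k, pvec d k * Real.log (pvec d k) - ∑ k, pvec d k * θ k
      + Real.log (∑ j, Real.exp (θ j)) := by
  have h : ∀ k, pvec d k * Real.log (pvec d k / softmax θ k) =
      pvec d k * Real.log (pvec d k) - pvec d k * θ k
        + pvec d k * Real.log (∑ j, Real.exp (θ j)) := by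
    intro k
    rw [Real.log_div (pvec_pos hd k).ne' (softmax_pos hd θ k).ne']
    unfold softmax
    rw [Real.log_div (Real.exp_pos _).ne' (sum_exp_pos hd θ).ne', Real.log_exp]
    ring
  unfold floss
  rw [Finset.sum_congr rfl (fun k _ => h k), Finset.sum_add_distrib, Finset.sum_sub_distrib,
    ← Finset.sum_mul, sum_pvec hd, one_mul]

lemma grad_floss {d : ℕ} (hd : 0 < d) (θ : Fin d → ℝ) (k : Fin d) :
    grad (floss d) θ k = softmax θ k - pvec d k := by
  have hZ : HasFDerivAt (fun θ : Fin d → ℝ => ∑ j, Real.exp (θ j))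
      (∑ j, Real.exp (θ j) • (ContinuousLinearMap.proj j : (Fin d → ℝ) →L[ℝ] ℝ)) θ :=
    HasFDerivAt.fun_sum fun j _ => (hasFDerivAt_apply j θ).exp
  have hlin : HasFDerivAt (fun θ : Fin d → ℝ => ∑ j, pvec d j * θ j)
      (∑ j, pvec d j • (ContinuousLinearMap.proj j : (Fin d → ℝ) →L[ℝ] ℝ)) θ :=
    HasFDerivAt.fun_sum fun j _ => (hasFDerivAt_apply j θ).const_mul _
  have hf := (hlin.const_sub (∑ k, pvec d k * Real.log (pvec d k))).add
    (hZ.log (sum_exp_pos hd θ).ne')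
  have hfun : floss d = (fun θ : Fin d → ℝ => ∑ k, pvec d k * Real.log (pvec d k)
      - ∑ k, pvec d k * θ k) + fun θ => Real.log (∑ j, Real.exp (θ j)) :=
    funext (floss_eq hd)
  unfold grad
  rw [hfun, hf.fderiv]
  simp [Pi.single_apply, softmax]
  ring

lemma grad_sub {d : ℕ} (hd : 0 < d) (x y : Fin d → ℝ) :
    grad (floss d) x - grad (floss d) y = softmax x - softmax y := by
  funext k
  simp only [Pi.sub_apply, grad_floss hd]
  ring

/-- Gibbs' inequality. -/
lemma floss_nonneg {d : ℕ} (hd : 0 < d) (θ : Fin d → ℝ) : 0 ≤ floss d θ := by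
  have h : ∑ k, (pvec d k - softmax θ k) ≤ floss d θ := by
    refine Finset.sum_le_sum fun k _ => ?_
    have hp := pvec_pos hd k
    have hs := softmax_pos hd θ k
    have h1 := Real.one_sub_inv_le_log_of_pos (div_pos hp hs)
    have h2 := mul_le_mul_of_nonneg_left h1 hp.le
    have h3 : pvec d k * (1 - (pvec d k / softmax θ k)⁻¹) = pvec d k - softmax θ k := by
      field_simp
    linarith
  rwa [Finset.sum_sub_distrib, sum_pvec hd, sum_softmax hd, sub_self] at h

lemma softmax_shift (d : ℕ) (a : ℝ) :
    softmax (fun k : Fin d => a - Real.log ((k : ℕ) + 1)) = pvec d := by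
  have h : ∀ k : Fin d, Real.exp (a - Real.log ((k : ℕ) + 1))
      = Real.exp a * (1 / ((k : ℕ) + 1)) := by
    intro k
    rw [Real.exp_sub, Real.exp_log (by positivity)]
    ring
  funext k
  simp only [softmax, pvec, h]
  rw [← Finset.mul_sum, mul_div_mul_left _ _ (Real.exp_pos a).ne']

lemma minimizer_iff {d : ℕ} (hd : 0 < d) (θ : Fin d → ℝ) :
    (∀ η, floss d θ ≤ floss d η) ↔ ∃ a : ℝ, θ = fun k : Fin d => a - Real.log ((k : ℕ) + 1) := by
  constructor
  · intro h
    have hmin : IsLocalMin (floss d) θ := Filter.Eventually.of_forall h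
    have hfd := hmin.fderiv_eq_zero
    refine ⟨Real.log (∑ j, Real.exp (θ j))
      - Real.log (∑ j : Fin d, (1 : ℝ) / ((j : ℕ) + 1)), funext fun k => ?_⟩
    have hk : softmax θ k = pvec d k := by
      have := grad_floss hd θ k
      unfold grad at this
      rw [hfd] at this
      simp only [zero_apply] at this
      linarith
    have hlog := congrArg Real.log hk
    unfold softmax pvec at hlog
    rw [Real.log_div (Real.exp_pos _).ne' (sum_exp_pos hd θ).ne', Real.log_exp,
      Real.log_div (by positivity) (sum_inv_pos hd).ne', one_div, Real.log_inv] at hlog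
    linarith
  · rintro ⟨a, rfl⟩ η
    have h0 : floss d (fun k : Fin d => a - Real.log ((k : ℕ) + 1)) = 0 := by
      unfold floss
      rw [softmax_shift d]
      refine Finset.sum_eq_zero fun k _ => ?_
      rw [div_self (pvec_pos hd k).ne', Real.log_one, mul_zero]
    rw [h0]
    exact floss_nonneg hd η

/-! ### The smoothness constants -/

/-- If the masses `A, B` of a set and its complement come from `A', B'` with `A ≤ q A'` and
`B' ≤ q B`, the normalized mass of the set increases by at most `(q - 1) / (q + 1)`. -/
lemma mass_diff_le {A B A' B' q : ℝ} (hA : 0 ≤ A) (hB' : 0 ≤ B') (hq : 1 ≤ q)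
    (h : 0 < A + B) (h' : 0 < A' + B') (h1 : A ≤ q * A') (h2 : B' ≤ q * B) :
    A / (A + B) - A' / (A' + B') ≤ (q - 1) / (q + 1) := by
  rw [div_sub_div _ _ h.ne' h'.ne', div_le_div_iff₀ (by positivity) (by linarith)]
  have e1 : A * A ≤ A * (q * A') := mul_le_mul_of_nonneg_left h1 hA
  have e2 : B' * B' ≤ B' * (q * B) := mul_le_mul_of_nonneg_left h2 hB'
  have e3 : A * B' ≤ (q * A') * (q * B) := mul_le_mul h1 h2 hB' (hA.trans h1)
  have e4 : (q - 1) * (2 * (A * B')) ≤ (q - 1) * (A * (q * A') + B' * (q * B)) :=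
    mul_le_mul_of_nonneg_left (by nlinarith [sq_nonneg (A - B')]) (by linarith)
  have e5 : q * (2 * (A * B')) ≤ q * ((q - 1) * (A * A' + B * B') + 2 * q * (A' * B)) := by
    nlinarith
  have e6 := le_of_mul_le_mul_left e5 (by linarith)
  nlinarith

lemma softmax_l1_le {d : ℕ} (hd : 0 < d) (x y : Fin d → ℝ) :
    l1norm (softmax x - softmax y) ≤ ‖x - y‖ := by
  classical
  set S : Finset (Fin d) := Finset.univ.filter fun k => softmax y k ≤ softmax x k with hS
  set δ := ‖x - y‖ with hδ
  have hδ0 : 0 ≤ δ := norm_nonneg _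
  have hco : ∀ k, |x k - y k| ≤ δ := fun k => norm_le_pi_norm (x - y) k
  have hsum : ∀ g : Fin d → ℝ, ∑ k ∈ S, g k + ∑ k ∈ Sᶜ, g k = ∑ k, g k :=
    fun g => Finset.sum_add_sum_compl S g
  have hl1 : l1norm (softmax x - softmax y)
      = 2 * (∑ k ∈ S, softmax x k - ∑ k ∈ S, softmax y k) := by
    have ha : ∑ k ∈ S, |(softmax x - softmax y) k| = ∑ k ∈ S, (softmax x k - softmax y k) :=
      Finset.sum_congr rfl fun k hk => by
        have : softmax y k ≤ softmax x k := by simpa [hS] using hk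
        simp [Pi.sub_apply, abs_of_nonneg (sub_nonneg.2 this)]
    have hb : ∑ k ∈ Sᶜ, |(softmax x - softmax y) k|
        = ∑ k ∈ Sᶜ, -(softmax x k - softmax y k) :=
      Finset.sum_congr rfl fun k hk => by
        have : softmax x k < softmax y k := by simpa [hS] using hk
        simp [Pi.sub_apply, abs_of_neg (sub_neg.2 this)]
    have hx := hsum (softmax x)
    have hy := hsum (softmax y)
    rw [sum_softmax hd] at hx hy
    unfold l1norm
    rw [← hsum, ha, hb, Finset.sum_neg_distrib, Finset.sum_sub_distrib, Finset.sum_sub_distrib]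
    linarith
  have hmass : ∀ z : Fin d → ℝ, ∑ k ∈ S, softmax z k
      = (∑ k ∈ S, Real.exp (z k)) / (∑ k ∈ S, Real.exp (z k) + ∑ k ∈ Sᶜ, Real.exp (z k)) := by
    intro z
    rw [hsum fun k => Real.exp (z k)]
    simp only [softmax, Finset.sum_div]
  have hpos : ∀ z : Fin d → ℝ, 0 < ∑ k ∈ S, Real.exp (z k) + ∑ k ∈ Sᶜ, Real.exp (z k) := by
    intro z
    rw [hsum fun k => Real.exp (z k)]
    exact sum_exp_pos hd z
  have hq : 1 ≤ Real.exp δ := Real.one_le_exp hδ0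
  have h1 : ∑ k ∈ S, Real.exp (x k) ≤ Real.exp δ * ∑ k ∈ S, Real.exp (y k) := by
    rw [Finset.mul_sum]
    refine Finset.sum_le_sum fun k _ => ?_
    rw [← Real.exp_add]
    exact Real.exp_le_exp.2 (by linarith [(abs_le.1 (hco k)).2])
  have h2 : ∑ k ∈ Sᶜ, Real.exp (y k) ≤ Real.exp δ * ∑ k ∈ Sᶜ, Real.exp (x k) := by
    rw [Finset.mul_sum]
    refine Finset.sum_le_sum fun k _ => ?_
    rw [← Real.exp_add]
    exact Real.exp_le_exp.2 (by linarith [(abs_le.1 (hco k)).1])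
  have hmain := mass_diff_le (Finset.sum_nonneg fun _ _ => (Real.exp_pos _).le)
    (Finset.sum_nonneg fun _ _ => (Real.exp_pos _).le) hq (hpos x) (hpos y) h1 h2
  have hlog := Real.le_log_one_add_of_nonneg (x := Real.exp δ - 1) (by linarith)
  rw [add_sub_cancel, Real.log_exp, show Real.exp δ - 1 + 2 = Real.exp δ + 1 by ring,
    mul_div_assoc] at hlog
  rw [hl1, hmass, hmass]
  linarith

lemma Linf_mem {d : ℕ} (hd : 0 < d) (x y : Fin d → ℝ) :
    l1norm (grad (floss d) x - grad (floss d) y) ≤ 1 * ‖x - y‖ := by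
  rw [grad_sub hd, one_mul]
  exact softmax_l1_le hd x y

/-- The limit `t → 0` of `t ≤ sinh t`, used to turn difference quotients of the softmax map into
bounds on its Lipschitz constants. -/
lemma two_le_of_sinh_le {L C : ℝ}
    (h : ∀ t : ℝ, 0 < t → Real.exp t - Real.exp (-t) ≤ t * (L * (Real.exp t + Real.exp (-t) + C))) :
    2 ≤ L * (2 + C) := by
  have hlim : Filter.Tendsto (fun t : ℝ => L * (Real.exp t + Real.exp (-t) + C))
      (nhdsWithin 0 (Set.Ioi 0)) (nhds (L * (2 + C))) := by
    have hc : Continuous fun t : ℝ => L * (Real.exp t + Real.exp (-t) + C) := by fun_prop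
    have := hc.tendsto 0
    simp only [neg_zero, Real.exp_zero, one_add_one_eq_two] at this
    exact this.mono_left nhdsWithin_le_nhds
  refine ge_of_tendsto hlim ?_
  filter_upwards [self_mem_nhdsWithin] with t ht
  have ht : 0 < t := ht
  have hs := Real.self_le_sinh_iff.2 ht.le
  rw [Real.sinh_eq] at hs
  have := h t ht
  exact le_of_mul_le_mul_left (by linarith : t * 2 ≤ t * _) ht

lemma one_le_of_Linf {d : ℕ} (hd : 2 ≤ d) {L : ℝ}
    (hL : ∀ x y : Fin d → ℝ,
      l1norm (grad (floss d) x - grad (floss d) y) ≤ L * ‖x - y‖) : 1 ≤ L := by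
  obtain ⟨n, rfl⟩ : ∃ n, d = n + 1 := ⟨d - 1, by omega⟩
  have hn : (0 : ℝ) < n := by exact_mod_cast (by omega : 0 < n)
  suffices h : 2 ≤ L * (2 + 0) by linarith
  refine two_le_of_sinh_le fun t ht => ?_
  -- the first coordinate has softmax weight `e^s / (e^s + e^{-s})` under `w s`
  let w : ℝ → Fin (n + 1) → ℝ := fun s => Fin.cons (Real.log n + s) fun _ => -s
  have hZ : ∀ s, ∑ j, Real.exp (w s j) = n * (Real.exp s + Real.exp (-s)) := by
    intro s
    simp only [w, Fin.sum_univ_succ, Fin.cons_zero, Fin.cons_succ, Finset.sum_const,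
      Finset.card_univ, Fintype.card_fin, nsmul_eq_mul, Real.exp_add, Real.exp_log hn]
    ring
  have h0 : ∀ s, softmax (w s) 0 = Real.exp s / (Real.exp s + Real.exp (-s)) := by
    intro s
    unfold softmax
    rw [hZ]
    simp only [w, Fin.cons_zero, Real.exp_add, Real.exp_log hn]
    rw [mul_div_mul_left _ _ hn.ne']
  have hj : ∀ s (j : Fin n), softmax (w s) j.succ
      = Real.exp (-s) / (n * (Real.exp s + Real.exp (-s))) := by
    intro s j
    unfold softmax
    rw [hZ]
    simp only [w, Fin.cons_succ]
  have hnorm : ‖w t - w (-t)‖ ≤ 2 * t := by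
    refine (pi_norm_le_iff_of_nonneg (by linarith)).2 fun k => ?_
    rw [Real.norm_eq_abs]
    refine Fin.cases ?_ (fun j => ?_) k
    · simp only [w, Pi.sub_apply, Fin.cons_zero]
      rw [abs_le]; constructor <;> linarith
    · simp only [w, Pi.sub_apply, Fin.cons_succ]
      rw [abs_le]; constructor <;> linarith
  have hL0 : 0 ≤ L := by
    have h := hL (w t) (w (-t))
    have hne : 0 < ‖w t - w (-t)‖ := by
      refine norm_pos_iff.2 fun h => ?_
      have := congrFun h 0
      simp only [w, Pi.sub_apply, Fin.cons_zero, Pi.zero_apply] at this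
      linarith
    have hnn : 0 ≤ l1norm (grad (floss (n + 1)) (w t) - grad (floss (n + 1)) (w (-t))) :=
      Finset.sum_nonneg fun _ _ => abs_nonneg _
    exact nonneg_of_mul_nonneg_left (hnn.trans h) hne
  have h := (hL (w t) (w (-t))).trans (mul_le_mul_of_nonneg_left hnorm hL0)
  have hlt : Real.exp (-t) ≤ Real.exp t := Real.exp_le_exp.2 (by linarith)
  have hp := Real.exp_pos t
  have hm := Real.exp_pos (-t)
  have hl1 : l1norm (softmax (w t) - softmax (w (-t)))
      = 2 * ((Real.exp t - Real.exp (-t)) / (Real.exp t + Real.exp (-t))) := by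
    unfold l1norm
    rw [Fin.sum_univ_succ]
    simp only [Pi.sub_apply, h0, hj, neg_neg, Finset.sum_const, Finset.card_univ,
      Fintype.card_fin, nsmul_eq_mul]
    rw [add_comm (Real.exp (-t)) (Real.exp t), ← sub_div, ← sub_div, abs_of_nonneg,
      abs_of_nonpos]
    · field_simp
      ring
    · exact div_nonpos_of_nonpos_of_nonneg (by linarith) (by positivity)
    · exact div_nonneg (by linarith) (by positivity)
  rw [grad_sub (by omega), hl1] at h
  have h3 : (Real.exp t - Real.exp (-t)) / (Real.exp t + Real.exp (-t)) ≤ t * L := by linarith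
  rw [div_le_iff₀ (by positivity)] at h3
  linarith

lemma Linf_eq {d : ℕ} (hd : 2 ≤ d) : Linf d = 1 :=
  IsLeast.csInf_eq ⟨⟨zero_le_one, Linf_mem (by omega)⟩, fun _ hL => one_le_of_Linf hd hL.2⟩

lemma l2norm_le_l1norm {d : ℕ} (x : Fin d → ℝ) : l2norm x ≤ l1norm x := by
  have h0 : 0 ≤ l1norm x := Finset.sum_nonneg fun _ _ => abs_nonneg _
  refine Real.sqrt_le_iff.2 ⟨h0, ?_⟩
  have := Finset.sum_sq_le_sq_sum_of_nonneg (s := Finset.univ) (f := fun k => |x k|)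
    (fun _ _ => abs_nonneg _)
  simp only [sq_abs] at this
  exact this

lemma norm_le_l2norm {d : ℕ} (x : Fin d → ℝ) : ‖x‖ ≤ l2norm x := by
  refine (pi_norm_le_iff_of_nonneg (Real.sqrt_nonneg _)).2 fun k => ?_
  rw [Real.norm_eq_abs]
  refine Real.abs_le_sqrt ?_
  exact Finset.single_le_sum (f := fun k => (x k) ^ 2) (fun _ _ => sq_nonneg _)
    (Finset.mem_univ k)

lemma Ltwo_mem {d : ℕ} (hd : 0 < d) (x y : Fin d → ℝ) :
    l2norm (grad (floss d) x - grad (floss d) y) ≤ 1 * l2norm (x - y) := by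
  rw [one_mul, grad_sub hd]
  exact (l2norm_le_l1norm _).trans ((softmax_l1_le hd x y).trans (norm_le_l2norm _))

lemma half_le_of_Ltwo {d : ℕ} (hd : 2 ≤ d) {L : ℝ}
    (hL : ∀ x y : Fin d → ℝ,
      l2norm (grad (floss d) x - grad (floss d) y) ≤ L * l2norm (x - y)) : 1 / 2 ≤ L := by
  obtain ⟨n, rfl⟩ : ∃ n, d = n + 2 := ⟨d - 2, by omega⟩
  -- under `w s`, the coordinates other than the first two have total unnormalized weight `n e^{-M}`
  have key : ∀ M : ℝ, 2 ≤ 2 * L * (2 + n * Real.exp (-M)) := by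
    intro M
    refine two_le_of_sinh_le fun t ht => ?_
    let w : ℝ → Fin (n + 2) → ℝ := fun s => Fin.cons s (Fin.cons (-s) fun _ => -M)
    have hZ : ∀ s, ∑ j, Real.exp (w s j)
        = Real.exp s + Real.exp (-s) + n * Real.exp (-M) := by
      intro s
      simp only [w, Fin.sum_univ_succ, Fin.cons_zero, Fin.cons_succ, Finset.sum_const,
        Finset.card_univ, Fintype.card_fin, nsmul_eq_mul]
      ring
    have hp := Real.exp_pos t
    have hm := Real.exp_pos (-t)
    have hM := Real.exp_pos (-M)
    set Z := Real.exp t + Real.exp (-t) + n * Real.exp (-M) with hZdef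
    have hZpos : 0 < Z := by positivity
    have hZ1 : ∑ j, Real.exp (w t j) = Z := hZ t
    have hZ2 : ∑ j, Real.exp (w (-t) j) = Z := by
      rw [hZ, neg_neg, hZdef]
      ring
    have hdist : l2norm (w t - w (-t)) = Real.sqrt 2 * (2 * t) := by
      have : ∑ k, ((w t - w (-t)) k) ^ 2 = 2 * (2 * t) ^ 2 := by
        simp only [w, Fin.sum_univ_succ, Pi.sub_apply, Fin.cons_zero, Fin.cons_succ, sub_self]
        simp
        ring
      rw [l2norm, this, Real.sqrt_mul zero_le_two, Real.sqrt_sq (by linarith)]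
    have hgrad : l2norm (softmax (w t) - softmax (w (-t)))
        = Real.sqrt 2 * ((Real.exp t - Real.exp (-t)) / Z) := by
      have hlt : Real.exp (-t) ≤ Real.exp t := Real.exp_le_exp.2 (by linarith)
      have : ∑ k, ((softmax (w t) - softmax (w (-t))) k) ^ 2
          = 2 * ((Real.exp t - Real.exp (-t)) / Z) ^ 2 := by
        simp only [Pi.sub_apply, softmax, hZ1, hZ2]
        simp only [w, Fin.sum_univ_succ, Fin.cons_zero, Fin.cons_succ, sub_self, neg_neg]
        simp
        ring
      rw [l2norm, this, Real.sqrt_mul zero_le_two,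
        Real.sqrt_sq (div_nonneg (by linarith) hZpos.le)]
    have h := hL (w t) (w (-t))
    rw [grad_sub (by omega), hgrad, hdist, mul_left_comm] at h
    have h2 := le_of_mul_le_mul_left h (Real.sqrt_pos.2 two_pos)
    rw [div_le_iff₀ hZpos] at h2
    linarith
  have hlim : Filter.Tendsto (fun M : ℝ => 2 * L * (2 + n * Real.exp (-M))) Filter.atTop
      (nhds (2 * L * (2 + n * 0))) :=
    ((Real.tendsto_exp_neg_atTop_nhds_zero.const_mul _).const_add _).const_mul _
  have := ge_of_tendsto' hlim key
  linarith

lemma half_le_Ltwo {d : ℕ} (hd : 2 ≤ d) : 1 / 2 ≤ Ltwo d :=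
  le_csInf ⟨1, zero_le_one, Ltwo_mem (by omega)⟩ fun _ hL => half_le_of_Ltwo hd hL.2

/-! ### Norms of the minimizers -/

lemma sum_Icc_log (d : ℕ) (a : ℝ) :
    ∑ k ∈ Finset.Icc 1 d, (a - Real.log (k : ℝ)) ^ 2
      = ∑ k ∈ Finset.range d, (a - Real.log ((k : ℝ) + 1)) ^ 2 := by
  rw [← Finset.Ico_add_one_right_eq_Icc, Finset.sum_Ico_eq_sum_range]
  refine Finset.sum_congr (by simp) fun k _ => ?_
  push_cast
  rw [add_comm]

lemma minNormInf_eq {d : ℕ} (hd : 2 ≤ d) : minNormInf d = Real.log d / 2 := by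
  have hd0 : 0 < d := by omega
  have hcast : ((d - 1 : ℕ) : ℝ) + 1 = d := by exact_mod_cast (by omega : d - 1 + 1 = d)
  refine IsLeast.csInf_eq ⟨?_, ?_⟩
  · refine ⟨_, (minimizer_iff hd0 _).2 ⟨Real.log d / 2, rfl⟩, le_antisymm ?_ ?_⟩
    · have h := norm_le_pi_norm (fun k : Fin d => Real.log d / 2 - Real.log ((k : ℕ) + 1))
        ⟨0, hd0⟩
      simp only [Nat.cast_zero, zero_add, Real.log_one, sub_zero, Real.norm_eq_abs] at h
      exact (le_abs_self _).trans h
    · refine (pi_norm_le_iff_of_nonneg (by positivity)).2 fun k => ?_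
      have h1 : 0 ≤ Real.log ((k : ℕ) + 1 : ℝ) :=
        Real.log_nonneg (by linarith [Nat.cast_nonneg (α := ℝ) (k : ℕ)])
      have h2 : Real.log ((k : ℕ) + 1 : ℝ) ≤ Real.log d :=
        Real.log_le_log (by positivity) (by exact_mod_cast k.2)
      rw [Real.norm_eq_abs, abs_le]
      constructor <;> linarith
  · rintro r ⟨θ, hθ, rfl⟩
    obtain ⟨a, rfl⟩ := (minimizer_iff hd0 θ).1 hθ
    have h1 := norm_le_pi_norm (fun k : Fin d => a - Real.log ((k : ℕ) + 1)) ⟨0, hd0⟩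
    have h2 := norm_le_pi_norm (fun k : Fin d => a - Real.log ((k : ℕ) + 1))
      ⟨d - 1, by omega⟩
    simp only [Nat.cast_zero, zero_add, Real.log_one, sub_zero, Real.norm_eq_abs, hcast]
      at h1 h2
    linarith [(abs_le.1 h1).2, (abs_le.1 h2).1]

/-- `d V_d` is at most the sum of squared deviations from any `a`. -/
lemma mul_logVar_le {d : ℕ} (hd : 0 < d) (a : ℝ) :
    d * logVar d ≤ ∑ k ∈ Finset.Icc 1 d, (a - Real.log (k : ℝ)) ^ 2 := by
  have hd' : (0 : ℝ) < d := by exact_mod_cast hd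
  have h : ∑ k ∈ Finset.Icc 1 d, (a - Real.log (k : ℝ)) ^ 2
      = d * a ^ 2 - 2 * a * ∑ k ∈ Finset.Icc 1 d, Real.log (k : ℝ)
        + ∑ k ∈ Finset.Icc 1 d, (Real.log (k : ℝ)) ^ 2 := by
    simp only [sub_sq, Finset.sum_add_distrib, Finset.sum_sub_distrib, ← Finset.mul_sum,
      Finset.sum_const, Nat.card_Icc, Nat.add_sub_cancel, nsmul_eq_mul]
  rw [h]
  unfold logVar
  set T := ∑ k ∈ Finset.Icc 1 d, Real.log (k : ℝ)
  have h2 : (0 : ℝ) ≤ d * (a - T / d) ^ 2 := by positivity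
  have h3 : (d : ℝ) * (a - T / d) ^ 2 = d * a ^ 2 - 2 * a * T + T ^ 2 / d := by
    field_simp
    ring
  have h4 : ∀ Q : ℝ, (d : ℝ) * (1 / d * Q - (1 / d * T) ^ 2) = Q - T ^ 2 / d := by
    intro Q
    field_simp
  rw [h4]
  linarith

lemma mul_logVar_eq {d : ℕ} (hd : 0 < d) :
    ∃ a : ℝ, d * logVar d = ∑ k ∈ Finset.Icc 1 d, (a - Real.log (k : ℝ)) ^ 2 := by
  have hd' : (0 : ℝ) < d := by exact_mod_cast hd
  refine ⟨(∑ k ∈ Finset.Icc 1 d, Real.log (k : ℝ)) / d, ?_⟩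
  simp only [sub_sq, Finset.sum_add_distrib, Finset.sum_sub_distrib, ← Finset.mul_sum,
    Finset.sum_const, Nat.card_Icc, Nat.add_sub_cancel, nsmul_eq_mul]
  unfold logVar
  field_simp
  ring

/-- Each pair `(k, k + m)` with `1 ≤ k ≤ m = ⌊d/2⌋` contributes at least `(log 2)² / 2`. -/
lemma sum_log_sub_sq_ge {d : ℕ} (hd : 2 ≤ d) (a : ℝ) :
    (Real.log 2) ^ 2 / 6 * d ≤ ∑ k ∈ Finset.Icc 1 d, (a - Real.log (k : ℝ)) ^ 2 := by
  obtain ⟨m, hm1, hm2⟩ : ∃ m, 2 * m ≤ d ∧ d ≤ 3 * m := ⟨d / 2, by omega, by omega⟩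
  have hm2' : (d : ℝ) ≤ 3 * m := by exact_mod_cast hm2
  have hl2 : 0 < Real.log 2 := Real.log_pos one_lt_two
  set g : ℕ → ℝ := fun k => (a - Real.log ((k : ℝ) + 1)) ^ 2 with hg
  have hIcc : ∑ k ∈ Finset.Icc 1 d, (a - Real.log (k : ℝ)) ^ 2 = ∑ k ∈ Finset.range d, g k :=
    sum_Icc_log d a
  have hsub : ∑ k ∈ Finset.range (m + m), g k ≤ ∑ k ∈ Finset.range d, g k :=
    Finset.sum_le_sum_of_subset_of_nonneg (Finset.range_subset_range.2 (by omega))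
      fun _ _ _ => sq_nonneg _
  have hpair : ∀ k ∈ Finset.range m, (Real.log 2) ^ 2 / 2 ≤ g k + g (m + k) := by
    intro k hk
    have hkm : (k : ℝ) + 1 ≤ m := by exact_mod_cast Finset.mem_range.1 hk
    have hlog : Real.log 2 + Real.log ((k : ℝ) + 1) ≤ Real.log (((m + k : ℕ) : ℝ) + 1) := by
      rw [← Real.log_mul two_ne_zero (by positivity)]
      refine Real.log_le_log (by positivity) ?_
      push_cast
      linarith
    simp only [hg]
    nlinarith [sq_nonneg (a - Real.log ((k : ℝ) + 1) + (a - Real.log (((m + k : ℕ) : ℝ) + 1)))]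
  have hsum : m * ((Real.log 2) ^ 2 / 2) ≤ ∑ k ∈ Finset.range (m + m), g k := by
    rw [Finset.sum_range_add, ← Finset.sum_add_distrib]
    simpa using Finset.card_nsmul_le_sum _ _ _ hpair
  rw [hIcc]
  nlinarith [sq_nonneg (Real.log 2)]

lemma mul_logVar_le_minNormTwo_sq {d : ℕ} (hd : 0 < d) :
    d * logVar d ≤ (minNormTwo d) ^ 2 := by
  refine (Real.sqrt_le_iff.1 ?_).2
  refine le_csInf ⟨_, _, (minimizer_iff hd _).2 ⟨0, rfl⟩, rfl⟩ ?_
  rintro r ⟨θ, hθ, rfl⟩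
  obtain ⟨a, rfl⟩ := (minimizer_iff hd θ).1 hθ
  refine Real.sqrt_le_sqrt ((mul_logVar_le hd a).trans_eq ?_)
  rw [sum_Icc_log, Finset.sum_range]

/-! ### The complexities -/

lemma Ctwo_ge {d : ℕ} (hd : 2 ≤ d) : 4 * d * logVar d ≤ Ctwo d := by
  unfold Ctwo
  have h1 := mul_logVar_le_minNormTwo_sq (d := d) (by omega)
  have h2 := mul_le_mul_of_nonneg_right (half_le_Ltwo hd) (sq_nonneg (minNormTwo d))
  linarith

lemma Ctwo_ge_linear {d : ℕ} (hd : 2 ≤ d) : 2 * (Real.log 2) ^ 2 / 3 * d ≤ Ctwo d := by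
  obtain ⟨a, ha⟩ := mul_logVar_eq (d := d) (by omega)
  have h1 := sum_log_sub_sq_ge hd a
  have h2 := Ctwo_ge hd
  linarith

lemma Cinf_eq {d : ℕ} (hd : 2 ≤ d) : Cinf d = 2 * (Real.log d) ^ 2 := by
  rw [Cinf, Linf_eq hd, minNormInf_eq hd]
  ring

/-- `C_{ℓ∞}(f) = 2(log d)²` while `C_{ℓ2}(f) ≥ 4·d·V_d`, and there is a
dimension-independent `c > 0` with `C_{ℓ2}(f) ≥ c·d` for all `d ≥ 2`; in particular
`C_{ℓ∞}(f)/C_{ℓ2}(f) → 0` as `d → ∞`. -/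
theorem softmax_unigram_complexity_gap :
    (∀ d : ℕ, 2 ≤ d →
      Cinf d = 2 * (Real.log d) ^ 2 ∧ 4 * d * logVar d ≤ Ctwo d) ∧
    (∃ c : ℝ, 0 < c ∧ ∀ d : ℕ, 2 ≤ d → c * d ≤ Ctwo d) ∧
    Filter.Tendsto (fun d : ℕ => Cinf d / Ctwo d) Filter.atTop (nhds 0) := by
  have hc : 0 < 2 * (Real.log 2) ^ 2 / 3 := by
    have := Real.log_pos one_lt_two
    positivity
  refine ⟨fun d hd => ⟨Cinf_eq hd, Ctwo_ge hd⟩, ⟨_, hc, fun d hd => Ctwo_ge_linear hd⟩, ?_⟩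
  set c := 2 * (Real.log 2) ^ 2 / 3
  have hlim : Filter.Tendsto (fun d : ℕ => 2 * ((Real.log d) ^ 2 / (c * d + 0)))
      Filter.atTop (nhds (2 * 0)) :=
    ((Real.tendsto_pow_log_div_mul_add_atTop c 0 2 hc.ne').comp
      tendsto_natCast_atTop_atTop).const_mul 2
  rw [mul_zero] at hlim
  refine squeeze_zero' ?_ ?_ hlim
  · filter_upwards [Filter.eventually_ge_atTop 2] with d hd
    have h := Ctwo_ge_linear hd
    have h0 : 0 ≤ Ctwo d := le_trans (by positivity) h
    rw [Cinf_eq hd]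
    positivity
  · filter_upwards [Filter.eventually_ge_atTop 2] with d hd
    have hd' : (0 : ℝ) < d := by exact_mod_cast (by omega : 0 < d)
    rw [Cinf_eq hd, add_zero, ← mul_div_assoc]
    exact div_le_div_of_nonneg_left (by positivity) (by positivity) (Ctwo_ge_linear hd)
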